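/- Let X = ℓ¹(ℕ) and let B : X → X be the backward shift, B(x_1,x_2,x_3,…) = (x_2,x_3,…). For a real sequence (λ_i)_{i=1}^∞, set T_i = λ_i B^i. The following are equivalent: (1) (T_i) is mean Li-Yorke chaotic; (2) (T_i) has a dense absolutely mean irregular manifold; (3) limsup_{n→∞} (1/n)∑_{i=1}^n |λ_i| = ∞. -/

import Mathlib

open Filter Topology

variable {X Y : Type*} [NormedAddCommGroup X] [NormedSpace ℝ X]
  [NormedAddCommGroup Y] [NormedSpace ℝ Y]

/-- The Cesàro average `(1/n) ∑_{i=1}^{n} ‖T i x - T i y‖`. -/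
noncomputable def mavg (T : ℕ → X →L[ℝ] Y) (x y : X) (n : ℕ) : ℝ :=
  (∑ i ∈ Finset.Icc 1 n, ‖T i x - T i y‖) / n

/-- The Cesàro average `(1/n) ∑_{i=1}^{n} ‖T i x‖`. -/
noncomputable def avg (T : ℕ → X →L[ℝ] Y) (x : X) (n : ℕ) : ℝ :=
  (∑ i ∈ Finset.Icc 1 n, ‖T i x‖) / n

/-- `limsup_n (1/n) ∑_{i=1}^{n} ‖T i x - T i y‖`, computed in `EReal`. -/
noncomputable def msup (T : ℕ → X →L[ℝ] Y) (x y : X) : EReal :=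
  Filter.limsup (fun n => (mavg T x y n : EReal)) Filter.atTop

/-- `liminf_n (1/n) ∑_{i=1}^{n} ‖T i x - T i y‖`, computed in `EReal`. -/
noncomputable def minf (T : ℕ → X →L[ℝ] Y) (x y : X) : EReal :=
  Filter.liminf (fun n => (mavg T x y n : EReal)) Filter.atTop

/-- `limsup_n (1/n) ∑_{i=1}^{n} ‖T i x‖`, computed in `EReal`. -/
noncomputable def asup (T : ℕ → X →L[ℝ] Y) (x : X) : EReal :=
  Filter.limsup (fun n => (avg T x n : EReal)) Filter.atTop

/-- `liminf_n (1/n) ∑_{i=1}^{n} ‖T i x‖`, computed in `EReal`. -/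
noncomputable def ainf (T : ℕ → X →L[ℝ] Y) (x : X) : EReal :=
  Filter.liminf (fun n => (avg T x n : EReal)) Filter.atTop

/-- The sequence `(T i)` is mean Li-Yorke chaotic: there is an uncountable set all of
whose pairs of distinct points are mean Li-Yorke pairs. -/
def MeanLiYorkeChaotic (T : ℕ → X →L[ℝ] Y) : Prop :=
  ∃ K : Set X, ¬ K.Countable ∧
    ∀ x ∈ K, ∀ y ∈ K, x ≠ y → (minf T x y = 0 ∧ 0 < msup T x y)

/-- The space `ℓ¹(ℕ)` of absolutely summable real sequences. -/
noncomputable abbrev ellOne : Type := lp (fun _ : ℕ => ℝ) 1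

/-! The averages `q n x = (1/n) ∑_{i=1}^n ‖T i x‖` are continuous seminorms, and for weighted powers
of the backward shift they tend to `0` at every finitely supported vector. If `q n ≤ C ‖·‖`
uniformly in `n`, the set where `q n → 0` is closed, hence everything, and no mean Li-Yorke pair
exists. Otherwise a gliding hump argument gives vectors `x m` with `‖x m‖ ≤ 2⁻ᵐ` and indices
`o m ≤ p m` such that `q (p m) (x m) → ∞`, while all other `q (p m) (x j)` and `q (o m) (x j)` are
at most `2⁻ʲ`. Split the `x m` into infinitely many infinite columns and add the sum of the `k`-th
column to the `k`-th term of a spanning sequence that repeats each vector infinitely often: the span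
stays dense, because the column sums tend to `0`. A nonzero finite combination contains infinitely
many `x m` with one fixed nonzero coefficient, so its averages are unbounded along `p m`, and they
vanish along `o m` by dominated convergence: it is irregular.

For the shift, `q n` has operator norm `(1/n) ∑_{i=1}^n |λ i|`, attained at the unit vector `e n`.
-/

section EReal

lemma limsup_coe_ereal_eq_top_iff {u : ℕ → ℝ} :
    limsup (fun n => (u n : EReal)) atTop = ⊤ ↔ ¬ BddAbove (Set.range u) := by
  constructor
  · rintro h ⟨C, hC⟩
    have hle : limsup (fun n => (u n : EReal)) atTop ≤ C :=
      limsup_le_of_le (h := .of_forall fun n => EReal.coe_le_coe_iff.2 (hC ⟨n, rfl⟩))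
    exact (EReal.coe_lt_top C).not_ge (h ▸ hle)
  · intro h
    by_contra hne
    obtain ⟨C, hC, -⟩ := EReal.lt_iff_exists_real_btwn.1 (lt_top_iff_ne_top.2 hne)
    have hev : ∀ᶠ n in atTop, u n ≤ C :=
      (eventually_lt_of_limsup_lt hC).mono fun n hn => (EReal.coe_lt_coe_iff.1 hn).le
    exact h (IsBoundedUnder.bddAbove_range ⟨C, hev⟩)

lemma limsup_coe_ereal_eq_top_of_tendsto_comp {u : ℕ → ℝ} {φ : ℕ → ℕ} (hφ : Tendsto φ atTop atTop)
    (h : Tendsto (u ∘ φ) atTop atTop) : limsup (fun n => (u n : EReal)) atTop = ⊤ :=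
  top_unique <| (EReal.tendsto_coe_nhds_top_iff.2 h).limsup_eq.ge.trans <|
    limsup_le_limsup_of_le (u := fun n => (u n : EReal)) hφ

lemma liminf_coe_ereal_eq_zero_of_tendsto_comp {u : ℕ → ℝ} (hu : ∀ n, 0 ≤ u n) {φ : ℕ → ℕ}
    (hφ : Tendsto φ atTop atTop) (h : Tendsto (u ∘ φ) atTop (𝓝 0)) :
    liminf (fun n => (u n : EReal)) atTop = 0 := by
  refine le_antisymm ?_ (le_liminf_of_le (h := .of_forall fun n => EReal.coe_nonneg.2 (hu n)))
  have hcoe : Tendsto (fun m => (u (φ m) : EReal)) atTop (𝓝 0) := EReal.tendsto_coe.2 h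
  exact (liminf_le_liminf_of_le (u := fun n => (u n : EReal)) hφ).trans hcoe.liminf_eq.le

end EReal

section SeminormSequence

lemma tendsto_pair_atTop (k : ℕ) : Tendsto (Nat.pair k) atTop atTop :=
  tendsto_atTop_mono (Nat.right_le_pair k) tendsto_id

variable {𝕜 E : Type*} [RCLike 𝕜] [NormedAddCommGroup E] [NormedSpace 𝕜 E]
  {q : ℕ → Seminorm 𝕜 E}

/-- A vector is irregular for a sequence of seminorms if their values at it have lower limit `0`
and upper limit `∞`. For the Cesàro averages of `‖T i x‖` this is absolute mean irregularity. -/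
def IsIrregular (q : ℕ → Seminorm 𝕜 E) (x : E) : Prop :=
  liminf (fun n => (q n x : EReal)) atTop = 0 ∧ limsup (fun n => (q n x : EReal)) atTop = ⊤

/-- The subspace of vectors along which a sequence of seminorms tends to zero. -/
def vanishingSubmodule (q : ℕ → Seminorm 𝕜 E) : Submodule 𝕜 E where
  carrier := {x | Tendsto (fun n => q n x) atTop (𝓝 0)}
  zero_mem' := by simp
  add_mem' {x y} hx hy :=
    squeeze_zero (fun n => apply_nonneg (q n) _) (fun n => map_add_le_add (q n) x y)
      (by simpa using hx.add hy)
  smul_mem' c x hx := by simpa [map_smul_eq_mul] using hx.const_mul ‖c‖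

lemma vanishingSubmodule_eq_top_of_forall_le {C : ℝ} (hC : ∀ n x, q n x ≤ C * ‖x‖)
    (hdense : Dense (vanishingSubmodule q : Set E)) : vanishingSubmodule q = ⊤ := by
  have hlip (n : ℕ) : LipschitzWith C.toNNReal (q n) := .of_dist_le' fun x y => by
    rw [Real.dist_eq, dist_eq_norm]
    exact (abs_sub_map_le_sub (q n) x y).trans (hC n _)
  have hclosed : IsClosed (vanishingSubmodule q : Set E) :=
    (LipschitzWith.uniformEquicontinuous _ _ hlip).equicontinuous.isClosed_setOfPred_tendsto
      continuous_const
  exact SetLike.coe_injective (hclosed.closure_eq.symm.trans hdense.closure_eq)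

lemma seminorm_le_of_hasSum {ι : Type*} {p : Seminorm 𝕜 E} (hp : Continuous p) {f : ι → E} {a : E}
    {g : ι → ℝ} {b : ℝ} (hf : HasSum f a) (hg : HasSum g b) (hle : ∀ i, p (f i) ≤ g i) :
    p a ≤ b :=
  le_of_tendsto_of_tendsto' (hp.tendsto a |>.comp hf) hg fun s =>
    (Finset.le_sum_of_subadditive p (map_zero p).le (map_add_le_add p) s f).trans
      (Finset.sum_le_sum fun i _ => hle i)

lemma exists_forall_lt_le_mul_norm (hq : ∀ n, Continuous (q n)) (N : ℕ) :
    ∃ D : ℝ, 1 ≤ D ∧ ∀ n < N, ∀ x, q n x ≤ D * ‖x‖ := by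
  choose c hc0 hc using fun n => (q n).bound_of_continuous_normedSpace (hq n)
  have hsum (s : Finset ℕ) : 0 ≤ ∑ n ∈ s, c n := Finset.sum_nonneg fun n _ => (hc0 n).le
  refine ⟨1 + ∑ n ∈ Finset.range N, c n, by linarith [hsum (Finset.range N)], fun n hn x => ?_⟩
  have hcn : c n ≤ ∑ n ∈ Finset.range N, c n :=
    Finset.single_le_sum (fun n _ => (hc0 n).le) (Finset.mem_range.2 hn)
  exact (hc n x).trans (by gcongr; linarith)

lemma exists_mem_vanishingSubmodule_peak (hq : ∀ n, Continuous (q n))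
    (hunb : ∀ C : ℝ, ∃ n x, C * ‖x‖ < q n x) (hdense : Dense (vanishingSubmodule q : Set E))
    (N : ℕ) {ε : ℝ} (hε : 0 < ε) (M : ℝ) :
    ∃ x ∈ vanishingSubmodule q, ‖x‖ ≤ ε ∧ (∀ n < N, q n x ≤ ε) ∧ ∃ p ≥ N, M ≤ q p x := by
  obtain ⟨D, hD1, hD⟩ := exists_forall_lt_le_mul_norm hq N
  have hD0 : 0 < D := by linarith
  set η := ε / D with hη
  have hη0 : 0 < η := by positivity
  obtain ⟨p, y, hy, hyp⟩ : ∃ p, ∃ y ∈ vanishingSubmodule q, max D (M / η) * ‖y‖ < q p y := by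
    obtain ⟨p, hp⟩ := hunb (max D (M / η))
    obtain ⟨y, hy, hyp⟩ := hdense.exists_mem_open
      (isOpen_lt (continuous_const.mul continuous_norm) (hq p)) hp
    exact ⟨p, y, hy, hyp⟩
  have hy0 : 0 < ‖y‖ := norm_pos_iff.2 fun h => by simp [h] at hyp
  have hscale : ‖((η / ‖y‖ : ℝ) : 𝕜)‖ = η / ‖y‖ := RCLike.norm_of_nonneg (by positivity)
  have hnorm : ‖((η / ‖y‖ : ℝ) : 𝕜) • y‖ = η := by
    rw [norm_smul, hscale, div_mul_cancel₀ _ hy0.ne']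
  refine ⟨((η / ‖y‖ : ℝ) : 𝕜) • y, Submodule.smul_mem _ _ hy, ?_, fun n hn => ?_, p, ?_, ?_⟩
  · exact hnorm.trans_le (div_le_self hε.le hD1)
  · exact (hD n hn _).trans_eq (by rw [hnorm, hη, mul_div_cancel₀ _ hD0.ne'])
  · by_contra! hpN
    have : D * ‖y‖ ≤ max D (M / η) * ‖y‖ := by gcongr; exact le_max_left ..
    linarith [hD p hpN y]
  · rw [map_smul_eq_mul, hscale]
    calc M = η / ‖y‖ * (M / η * ‖y‖) := by field_simp
      _ ≤ η / ‖y‖ * (max D (M / η) * ‖y‖) := by gcongr; exact le_max_right ..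
      _ ≤ η / ‖y‖ * q p y := by gcongr

/-- A building block of the gliding hump construction: a vector `vec` that is still negligible at
the index `onset` and for which the seminorm of index `peak` is large. The tolerance attached to
the block is `(1 / 2) ^ onset`. -/
structure Hump (E : Type*) where
  onset : ℕ
  vec : E
  peak : ℕ

/-- The size conditions on a single hump. -/
structure Hump.IsAdmissible (q : ℕ → Seminorm 𝕜 E) (h : Hump E) : Prop where
  vec_mem : h.vec ∈ vanishingSubmodule q
  norm_le : ‖h.vec‖ ≤ (1 / 2) ^ h.onset
  onset_le : q h.onset h.vec ≤ (1 / 2) ^ h.onset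
  onset_le_peak : h.onset ≤ h.peak
  le_peak : h.onset ≤ q h.peak h.vec

/-- The hump `h` is followed by `h'` with neither vector disturbing the other at its two indices. -/
structure Hump.Precedes (q : ℕ → Seminorm 𝕜 E) (h h' : Hump E) : Prop where
  onset_lt : h.onset < h'.onset
  left_onset_le : q h'.onset h.vec ≤ (1 / 2) ^ h.onset
  left_peak_le : q h'.peak h.vec ≤ (1 / 2) ^ h.onset
  right_onset_le : q h.onset h'.vec ≤ (1 / 2) ^ h'.onset
  right_peak_le : q h.peak h'.vec ≤ (1 / 2) ^ h'.onset

/-- A sequence of admissible humps that pairwise do not disturb each other. -/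
structure IsGlidingHump (q : ℕ → Seminorm 𝕜 E) (h : ℕ → Hump E) : Prop where
  admissible : ∀ m, (h m).IsAdmissible q
  precedes : ∀ m n, m < n → (h m).Precedes q (h n)

lemma exists_isAdmissible_forall_precedes (hq : ∀ n, Continuous (q n))
    (hunb : ∀ C : ℝ, ∃ n x, C * ‖x‖ < q n x) (hdense : Dense (vanishingSubmodule q : Set E))
    (s : Finset (Hump E)) (hs : ∀ h ∈ s, h.IsAdmissible q) :
    ∃ h' : Hump E, h'.IsAdmissible q ∧ ∀ h ∈ s, h.Precedes q h' := by
  have hlate : ∀ᶠ k in atTop, ∀ h ∈ s,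
      h.peak < k ∧ ∀ n ≥ k, q n h.vec ≤ (1 / 2) ^ h.onset := by
    refine (Finset.eventually_all s).2 fun h hh => (eventually_gt_atTop _).and ?_
    exact eventually_forall_ge_atTop.2 ((hs h hh).vec_mem.eventually_le_const (by positivity))
  obtain ⟨k, hk⟩ := hlate.exists
  obtain ⟨x, hx, hxk, hsmall, p, hkp, hpx⟩ :=
    exists_mem_vanishingSubmodule_peak hq hunb hdense (k + 1) (ε := (1 / 2) ^ k) (by positivity) k
  refine ⟨⟨k, x, p⟩, ⟨hx, hxk, hsmall k k.lt_succ_self, by grind, hpx⟩, fun h hh => ?_⟩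
  obtain ⟨hpk, hvec⟩ := hk h hh
  have hok : h.onset < k := (hs h hh).onset_le_peak.trans_lt hpk
  exact ⟨hok, hvec k le_rfl, hvec p (by grind), hsmall _ (by grind), hsmall _ (by grind)⟩

lemma exists_isGlidingHump (hq : ∀ n, Continuous (q n))
    (hunb : ∀ C : ℝ, ∃ n x, C * ‖x‖ < q n x) (hdense : Dense (vanishingSubmodule q : Set E)) :
    ∃ h : ℕ → Hump E, IsGlidingHump q h := by
  obtain ⟨h, hadm, hprec⟩ := exists_seq_of_forall_finset_exists _ _
    (exists_isAdmissible_forall_precedes hq hunb hdense)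
  exact ⟨h, hadm, hprec⟩

namespace IsGlidingHump

variable {h : ℕ → Hump E}

lemma le_onset (H : IsGlidingHump q h) (m : ℕ) : m ≤ (h m).onset :=
  StrictMono.le_apply (f := fun m => (h m).onset) fun m n hmn => (H.precedes m n hmn).onset_lt

lemma pow_onset_le (H : IsGlidingHump q h) (m : ℕ) :
    (1 / 2 : ℝ) ^ (h m).onset ≤ (1 / 2) ^ m :=
  pow_le_pow_of_le_one (by norm_num) (by norm_num) (H.le_onset m)

lemma norm_vec_le (H : IsGlidingHump q h) (j : ℕ) : ‖(h j).vec‖ ≤ (1 / 2) ^ j :=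
  (H.admissible j).norm_le.trans (H.pow_onset_le j)

lemma apply_onset_le (H : IsGlidingHump q h) (m j : ℕ) :
    q (h m).onset (h j).vec ≤ (1 / 2) ^ j := by
  refine le_trans ?_ (H.pow_onset_le j)
  rcases lt_trichotomy m j with hmj | rfl | hjm
  · exact (H.precedes m j hmj).right_onset_le
  · exact (H.admissible m).onset_le
  · exact (H.precedes j m hjm).left_onset_le

lemma apply_peak_le (H : IsGlidingHump q h) {m j : ℕ} (hjm : j ≠ m) :
    q (h m).peak (h j).vec ≤ (1 / 2) ^ j := by
  refine le_trans ?_ (H.pow_onset_le j)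
  rcases hjm.lt_or_gt with hjm | hmj
  · exact (H.precedes j m hjm).left_peak_le
  · exact (H.precedes m j hmj).right_peak_le

lemma le_apply_peak (H : IsGlidingHump q h) (m : ℕ) : (m : ℝ) ≤ q (h m).peak (h m).vec :=
  (Nat.cast_le.2 (H.le_onset m)).trans (H.admissible m).le_peak

lemma tendsto_onset (H : IsGlidingHump q h) : Tendsto (fun m => (h m).onset) atTop atTop :=
  tendsto_atTop_mono H.le_onset tendsto_id

lemma tendsto_peak (H : IsGlidingHump q h) : Tendsto (fun m => (h m).peak) atTop atTop :=
  tendsto_atTop_mono (fun m => (H.admissible m).onset_le_peak) H.tendsto_onset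

variable {β : ℕ → 𝕜} {C : ℝ} {d w : E}

lemma tendsto_apply_onset_zero (H : IsGlidingHump q h) (hq : ∀ n, Continuous (q n))
    (hβ : ∀ j, ‖β j‖ ≤ C) (hd : d ∈ vanishingSubmodule q)
    (hw : HasSum (fun j => β j • (h j).vec) w) :
    Tendsto (fun m => q (h m).onset (d + w)) atTop (𝓝 0) := by
  have hbound (m j : ℕ) : ‖q (h m).onset (h j).vec‖ ≤ (1 / 2) ^ j := by
    rw [Real.norm_of_nonneg (apply_nonneg _ _)]
    exact H.apply_onset_le m j
  have hsum : Tendsto (fun m => ∑' j, q (h m).onset (h j).vec) atTop (𝓝 0) := by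
    simpa using tendsto_tsum_of_dominated_convergence (g := fun _ : ℕ => (0 : ℝ))
      summable_geometric_two (fun j => (H.admissible j).vec_mem.comp H.tendsto_onset)
      (.of_forall hbound)
  have hle (m : ℕ) : q (h m).onset w ≤ C * ∑' j, q (h m).onset (h j).vec := by
    have hsummable := Summable.of_norm_bounded summable_geometric_two (hbound m)
    refine seminorm_le_of_hasSum (hq _) hw (hsummable.hasSum.mul_left C) fun j => ?_
    rw [map_smul_eq_mul]
    gcongr
    exact hβ j
  refine squeeze_zero (fun m => apply_nonneg _ _)
    (fun m => (map_add_le_add _ d w).trans (add_le_add_right (hle m) _)) ?_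
  simpa using (hd.comp H.tendsto_onset).add (hsum.const_mul C)

lemma le_apply_peak_add (H : IsGlidingHump q h) (hq : ∀ n, Continuous (q n))
    (hβ : ∀ j, ‖β j‖ ≤ C) (hw : HasSum (fun j => β j • (h j).vec) w) (m : ℕ) :
    ‖β m‖ * m - q (h m).peak d - C * 2 ≤ q (h m).peak (d + w) := by
  have hrest : q (h m).peak (w - β m • (h m).vec) ≤ C * 2 := by
    refine seminorm_le_of_hasSum (hq _) (hasSum_ite_sub_hasSum hw m)
      (hasSum_geometric_two.mul_left C) fun j => ?_
    have hC : 0 ≤ C := (norm_nonneg _).trans (hβ j)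
    split_ifs with hjm
    · rw [map_zero]
      positivity
    · rw [map_smul_eq_mul]
      exact mul_le_mul (hβ j) (H.apply_peak_le hjm) (apply_nonneg _ _) hC
  have hpeak : ‖β m‖ * m ≤ q (h m).peak (β m • (h m).vec) := by
    rw [map_smul_eq_mul]
    gcongr
    exact H.le_apply_peak m
  have htri : q (h m).peak (β m • (h m).vec) ≤
      q (h m).peak (d + w) + (q (h m).peak d + q (h m).peak (w - β m • (h m).vec)) :=
    calc q (h m).peak (β m • (h m).vec)
        = q (h m).peak ((d + w) - (d + (w - β m • (h m).vec))) := by congr 1; abel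
      _ ≤ _ := (map_sub_le_add _ _ _).trans (add_le_add_right (map_add_le_add _ _ _) _)
  linarith

lemma isIrregular_add (H : IsGlidingHump q h) (hq : ∀ n, Continuous (q n))
    (hβ : ∀ j, ‖β j‖ ≤ C) {δ : ℝ} (hδ : 0 < δ) {φ : ℕ → ℕ} (hφ : Tendsto φ atTop atTop)
    (hβφ : ∀ i, δ ≤ ‖β (φ i)‖) (hd : d ∈ vanishingSubmodule q)
    (hw : HasSum (fun j => β j • (h j).vec) w) : IsIrregular q (d + w) := by
  refine ⟨liminf_coe_ereal_eq_zero_of_tendsto_comp (fun n => apply_nonneg _ _) H.tendsto_onset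
    (H.tendsto_apply_onset_zero hq hβ hd hw), ?_⟩
  have hpeak := H.tendsto_peak.comp hφ
  have hlower : Tendsto (fun i => δ * φ i + (-q (h (φ i)).peak d - C * 2)) atTop atTop :=
    ((tendsto_natCast_atTop_atTop.comp hφ).const_mul_atTop hδ).atTop_add
      ((hd.comp hpeak).neg.sub_const (C * 2))
  refine limsup_coe_ereal_eq_top_of_tendsto_comp hpeak (tendsto_atTop_mono (fun i => ?_) hlower)
  have hδφ : δ * φ i ≤ ‖β (φ i)‖ * φ i := by
    gcongr
    exact hβφ i
  have := H.le_apply_peak_add (d := d) hq hβ hw (φ i)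
  simp only [Function.comp_apply]
  linarith

/-- The sum of the humps in the `k`-th column of the pairing `ℕ × ℕ ≃ ℕ`. Distinct columns use
disjoint sets of humps, and each of them infinitely many. -/
noncomputable def column (h : ℕ → Hump E) (k : ℕ) : E :=
  ∑' i, (h (Nat.pair k i)).vec

lemma norm_vec_pair_le (H : IsGlidingHump q h) (k i : ℕ) :
    ‖(h (Nat.pair k i)).vec‖ ≤ (1 / 2) ^ k * (1 / 2) ^ i := by
  rw [← pow_add]
  exact (H.norm_vec_le _).trans
    (pow_le_pow_of_le_one (by norm_num) (by norm_num) (Nat.add_le_pair k i))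

lemma norm_column_le (H : IsGlidingHump q h) (k : ℕ) : ‖column h k‖ ≤ (1 / 2) ^ k * 2 :=
  tsum_of_norm_bounded (hasSum_geometric_two.mul_left _) (H.norm_vec_pair_le k)

lemma tendsto_column_zero (H : IsGlidingHump q h) : Tendsto (column h) atTop (𝓝 0) := by
  refine squeeze_zero_norm H.norm_column_le ?_
  simpa using (tendsto_pow_atTop_nhds_zero_of_lt_one (r := (1 / 2 : ℝ))
    (by norm_num) (by norm_num)).mul_const 2

lemma hasSum_column [CompleteSpace E] (H : IsGlidingHump q h) (k : ℕ) :
    HasSum (fun m => if m.unpair.1 = k then (h m).vec else 0) (column h k) := by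
  have hinj : Function.Injective (Nat.pair k) := fun i j hij => (Nat.pair_eq_pair.1 hij).2
  refine (hinj.hasSum_iff fun m hm => if_neg fun hk => hm ⟨m.unpair.2, ?_⟩).1 ?_
  · rw [← hk, Nat.pair_unpair]
  · have hsummable : Summable fun i => (h (Nat.pair k i)).vec :=
      .of_norm_bounded (summable_geometric_two.mul_left _) (H.norm_vec_pair_le k)
    simpa [Function.comp_def, column] using hsummable.hasSum

lemma hasSum_sum_smul_column [CompleteSpace E] (H : IsGlidingHump q h) (c : ℕ →₀ 𝕜) :
    HasSum (fun m => c m.unpair.1 • (h m).vec) (∑ k ∈ c.support, c k • column h k) := by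
  refine (hasSum_sum fun k _ => (H.hasSum_column k).const_smul (c k)).congr_fun fun m => ?_
  simp +contextual [smul_ite, Finsupp.mem_support_iff]

lemma isIrregular_sum_smul [CompleteSpace E] (H : IsGlidingHump q h) (hq : ∀ n, Continuous (q n))
    {v : ℕ → E} (hv : ∀ k, v k ∈ vanishingSubmodule q) {c : ℕ →₀ 𝕜} (hc : c ≠ 0) :
    IsIrregular q (c.sum fun k a => a • (v k + column h k)) := by
  obtain ⟨k, hk⟩ := DFunLike.ne_iff.1 hc
  have hbdd (m : ℕ) : ‖c m.unpair.1‖ ≤ ∑ k ∈ c.support, ‖c k‖ := by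
    by_cases hm : m.unpair.1 ∈ c.support
    · exact Finset.single_le_sum (f := fun k => ‖c k‖) (fun k _ => norm_nonneg _) hm
    · rw [Finsupp.notMem_support_iff.1 hm, norm_zero]
      exact Finset.sum_nonneg fun k _ => norm_nonneg _
  simp only [Finsupp.sum, smul_add, Finset.sum_add_distrib]
  exact H.isIrregular_add hq hbdd (norm_pos_iff.2 hk) (tendsto_pair_atTop k)
    (fun i => by rw [Nat.unpair_pair])
    (Submodule.sum_mem _ fun k _ => Submodule.smul_mem _ _ (hv k)) (H.hasSum_sum_smul_column c)

end IsGlidingHump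

lemma dense_span_range_of_tendsto {d : ℕ → E} (hd : Dense (Submodule.span 𝕜 (Set.range d) : Set E))
    {v : ℕ → E} {φ : ℕ → ℕ → ℕ} (hv : ∀ j, Tendsto (fun i => v (φ j i)) atTop (𝓝 (d j))) :
    Dense (Submodule.span 𝕜 (Set.range v) : Set E) := by
  have hle : Submodule.span 𝕜 (Set.range d) ≤
      (Submodule.span 𝕜 (Set.range v)).topologicalClosure := by
    rw [Submodule.span_le, Set.range_subset_iff]
    exact fun j => mem_closure_of_tendsto (hv j)
      (.of_forall fun i => Submodule.subset_span ⟨φ j i, rfl⟩)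
  exact dense_closure.1 (hd.mono hle)

theorem exists_dense_submodule_isIrregular [CompleteSpace E] (hq : ∀ n, Continuous (q n))
    (hunb : ∀ C : ℝ, ∃ n x, C * ‖x‖ < q n x) {d : ℕ → E} (hd : ∀ j, d j ∈ vanishingSubmodule q)
    (hdense : Dense (Submodule.span 𝕜 (Set.range d) : Set E)) :
    ∃ Z : Submodule 𝕜 E, Dense (Z : Set E) ∧ ∀ z ∈ Z, z ≠ 0 → IsIrregular q z := by
  have hspan : Submodule.span 𝕜 (Set.range d) ≤ vanishingSubmodule q :=
    Submodule.span_le.2 (Set.range_subset_iff.2 hd)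
  obtain ⟨h, H⟩ := exists_isGlidingHump hq hunb (hdense.mono hspan)
  let v (k : ℕ) : E := d k.unpair.1 + IsGlidingHump.column h k
  refine ⟨Submodule.span 𝕜 (Set.range v), dense_span_range_of_tendsto hdense
    (φ := Nat.pair) fun j => ?_, fun z hz hz0 => ?_⟩
  · simpa [v] using (H.tendsto_column_zero.comp (tendsto_pair_atTop j)).const_add (d j)
  · obtain ⟨c, rfl⟩ := Finsupp.mem_span_range_iff_exists_finsupp.1 hz
    exact H.isIrregular_sum_smul hq (fun k => hd k.unpair.1) (by rintro rfl; simp at hz0)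

end SeminormSequence

section MeanLiYorke

variable {T : ℕ → X →L[ℝ] Y}

/-- The Cesàro average `x ↦ avg T x n` as a seminorm. -/
noncomputable def avgSeminorm (T : ℕ → X →L[ℝ] Y) (n : ℕ) : Seminorm ℝ X :=
  Seminorm.of (fun x => avg T x n)
    (fun x y => by
      simp only [avg, map_add, ← add_div, ← Finset.sum_add_distrib]
      gcongr
      exact norm_add_le _ _)
    (fun a x => by simp only [avg, map_smul, norm_smul, ← Finset.mul_sum, mul_div_assoc])

lemma continuous_avgSeminorm (n : ℕ) : Continuous (avgSeminorm T n) := by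
  change Continuous fun x => (∑ i ∈ Finset.Icc 1 n, ‖T i x‖) / n
  fun_prop

lemma mem_vanishingSubmodule_avgSeminorm_of_tendsto {x : X}
    (hx : Tendsto (fun i => T i x) atTop (𝓝 0)) : x ∈ vanishingSubmodule (avgSeminorm T) := by
  have hcesaro := ((tendsto_add_atTop_iff_nat 1).2 (tendsto_zero_iff_norm_tendsto_zero.1 hx)).cesaro
  refine hcesaro.congr fun n => ?_
  rw [Finset.range_eq_Ico, Finset.sum_Ico_add' (fun i => ‖T i x‖), zero_add,
    Finset.Ico_add_one_right_eq_Icc, inv_mul_eq_div]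
  rfl

lemma isIrregular_avgSeminorm_iff {x : X} :
    IsIrregular (avgSeminorm T) x ↔ ainf T x = 0 ∧ asup T x = ⊤ := Iff.rfl

lemma mavg_eq_avg_sub (x y : X) : mavg T x y = avg T (x - y) := by
  funext n
  simp only [mavg, avg, map_sub]

lemma MeanLiYorkeChaotic.exists_lt_avg (hT : MeanLiYorkeChaotic T)
    (hdense : Dense (vanishingSubmodule (avgSeminorm T) : Set X)) (C : ℝ) :
    ∃ n x, C * ‖x‖ < avg T x n := by
  by_contra! hC
  obtain ⟨K, hK, hpair⟩ := hT
  obtain ⟨x, hx, y, hy, hxy⟩ : K.Nontrivial :=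
    Set.not_subsingleton_iff.1 fun hs => hK hs.countable
  have hmem : x - y ∈ vanishingSubmodule (avgSeminorm T) :=
    vanishingSubmodule_eq_top_of_forall_le hC hdense ▸ Submodule.mem_top
  have hzero : msup T x y = 0 := by
    rw [msup, mavg_eq_avg_sub]
    exact (EReal.tendsto_coe.2 hmem).limsup_eq
  exact (hpair x hx y hy hxy).2.ne' hzero

lemma meanLiYorkeChaotic_of_isIrregular_smul {z : X} (hz0 : z ≠ 0)
    (hz : ∀ t : ℝ, t ≠ 0 → IsIrregular (avgSeminorm T) (t • z)) : MeanLiYorkeChaotic T := by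
  have hinj : Function.Injective fun t : ℝ => t • z := smul_left_injective ℝ hz0
  refine ⟨Set.range fun t : ℝ => t • z, fun hc => ?_, ?_⟩
  · rw [← Set.image_univ] at hc
    exact Cardinal.not_countable_real (Set.countable_of_injective_of_countable_image hinj.injOn hc)
  · rintro _ ⟨s, rfl⟩ _ ⟨t, rfl⟩ hst
    obtain ⟨hinf, hsup⟩ := hz (s - t) (sub_ne_zero.2 fun h => hst (by rw [h]))
    simp only [minf, msup, mavg_eq_avg_sub, ← sub_smul]
    exact ⟨hinf, EReal.zero_lt_top.trans_eq hsup.symm⟩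

theorem meanLiYorkeChaotic_tfae [CompleteSpace X] [Nontrivial X] {d : ℕ → X}
    (hd : ∀ j, d j ∈ vanishingSubmodule (avgSeminorm T))
    (hdense : Dense (Submodule.span ℝ (Set.range d) : Set X)) :
    List.TFAE [
      MeanLiYorkeChaotic T,
      ∃ Z : Submodule ℝ X, Dense (Z : Set X) ∧ ∀ z ∈ Z, z ≠ 0 → (ainf T z = 0 ∧ asup T z = ⊤),
      ∀ C : ℝ, ∃ n x, C * ‖x‖ < avg T x n] := by
  simp only [← isIrregular_avgSeminorm_iff]
  tfae_have 1 → 3 := fun hT => hT.exists_lt_avg <|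
    hdense.mono (Submodule.span_le.2 (Set.range_subset_iff.2 hd))
  tfae_have 3 → 2 := fun hunb =>
    exists_dense_submodule_isIrregular continuous_avgSeminorm hunb hd hdense
  tfae_have 2 → 1 := by
    rintro ⟨Z, hZ, hirr⟩
    obtain ⟨z, hzZ, hz0⟩ := hZ.exists_mem_open isOpen_compl_singleton (exists_ne (0 : X))
    exact meanLiYorkeChaotic_of_isIrregular_smul hz0 fun t ht =>
      hirr _ (Z.smul_mem t hzZ) (smul_ne_zero ht hz0)
  tfae_finish

end MeanLiYorke

section BackwardShift

variable {B : X →L[ℝ] X} {e : ℕ → X}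

lemma shift_pow_apply_add (hsucc : ∀ j, B (e (j + 1)) = e j) (i j : ℕ) :
    (B ^ i) (e (j + i)) = e j := by
  induction i with
  | zero => rfl
  | succ i ih => rw [pow_succ, mul_apply_eq_comp, ← add_assoc, hsucc, ih]

lemma shift_pow_apply_eq_zero (hzero : B (e 0) = 0) (hsucc : ∀ j, B (e (j + 1)) = e j) {i j : ℕ}
    (hij : j < i) : (B ^ i) (e j) = 0 := by
  obtain ⟨k, rfl⟩ := Nat.exists_eq_add_of_lt hij
  have hj := shift_pow_apply_add hsucc j 0
  rw [zero_add] at hj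
  rw [show j + k + 1 = k + 1 + j by ring, pow_add, mul_apply_eq_comp, hj, pow_succ,
    mul_apply_eq_comp, hzero, map_zero]

lemma avg_smul_pow_le (hnorm : ‖B‖ ≤ 1) (lam : ℕ → ℝ) (x : X) (n : ℕ) :
    avg (fun i => lam i • B ^ i) x n ≤ (∑ i ∈ Finset.Icc 1 n, |lam i|) / n * ‖x‖ := by
  rw [avg, div_mul_eq_mul_div, Finset.sum_mul]
  gcongr with i hi
  rw [smul_apply, norm_smul, Real.norm_eq_abs]
  gcongr
  have hpow : ‖B ^ i‖ ≤ 1 :=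
    (norm_pow_le' B (Finset.mem_Icc.1 hi).1).trans (pow_le_one₀ (norm_nonneg B) hnorm)
  simpa using (B ^ i).le_of_opNorm_le hpow x

lemma avg_smul_pow_apply_self (hsucc : ∀ j, B (e (j + 1)) = e j) (he : ∀ j, ‖e j‖ = 1)
    (lam : ℕ → ℝ) (n : ℕ) :
    avg (fun i => lam i • B ^ i) (e n) n = (∑ i ∈ Finset.Icc 1 n, |lam i|) / n := by
  rw [avg]
  congr 1
  refine Finset.sum_congr rfl fun i hi => ?_
  have hpow := shift_pow_apply_add hsucc i (n - i)
  rw [Nat.sub_add_cancel (Finset.mem_Icc.1 hi).2] at hpow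
  rw [smul_apply, norm_smul, Real.norm_eq_abs, hpow, he, mul_one]

lemma forall_exists_lt_avg_smul_pow_iff (hnorm : ‖B‖ ≤ 1) (hsucc : ∀ j, B (e (j + 1)) = e j)
    (he : ∀ j, ‖e j‖ = 1) (lam : ℕ → ℝ) :
    (∀ C : ℝ, ∃ n x, C * ‖x‖ < avg (fun i => lam i • B ^ i) x n) ↔
      ¬ BddAbove (Set.range fun n : ℕ => (∑ i ∈ Finset.Icc 1 n, |lam i|) / (n : ℝ)) := by
  constructor
  · rintro hunb ⟨C, hC⟩
    obtain ⟨n, x, hx⟩ := hunb C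
    refine hx.not_ge ((avg_smul_pow_le hnorm lam x n).trans ?_)
    gcongr
    exact hC ⟨n, rfl⟩
  · intro hunb C
    obtain ⟨_, ⟨n, rfl⟩, hn⟩ := not_bddAbove_iff.1 hunb C
    exact ⟨n, e n, by rwa [he, mul_one, avg_smul_pow_apply_self hsucc he]⟩

theorem backwardShift_meanLiYorkeChaotic_tfae_general [CompleteSpace X] (hnorm : ‖B‖ ≤ 1)
    (hdense : Dense (Submodule.span ℝ (Set.range e) : Set X)) (he : ∀ j, ‖e j‖ = 1)
    (hzero : B (e 0) = 0) (hsucc : ∀ j, B (e (j + 1)) = e j) (lam : ℕ → ℝ) :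
    List.TFAE [
      MeanLiYorkeChaotic fun i => lam i • B ^ i,
      ∃ Z : Submodule ℝ X, Dense (Z : Set X) ∧ ∀ z ∈ Z, z ≠ 0 →
        (ainf (fun i => lam i • B ^ i) z = 0 ∧ asup (fun i => lam i • B ^ i) z = ⊤),
      limsup (fun n => (((∑ i ∈ Finset.Icc 1 n, |lam i|) / n : ℝ) : EReal)) atTop = ⊤] := by
  have : Nontrivial X := ⟨e 0, 0, norm_ne_zero_iff.1 (by simp [he])⟩
  have hvanish (j : ℕ) : e j ∈ vanishingSubmodule (avgSeminorm fun i => lam i • B ^ i) := by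
    refine mem_vanishingSubmodule_avgSeminorm_of_tendsto (tendsto_const_nhds.congr' ?_)
    filter_upwards [eventually_gt_atTop j] with i hij
    rw [smul_apply, shift_pow_apply_eq_zero hzero hsucc hij, smul_zero]
  rw [limsup_coe_ereal_eq_top_iff, ← forall_exists_lt_avg_smul_pow_iff hnorm hsucc he]
  exact meanLiYorkeChaotic_tfae hvanish hdense

end BackwardShift

section SequenceSpace

variable {ι κ E : Type*} [NormedAddCommGroup E] {p : ENNReal}

lemma lp_norm_le_of_comp_injective (hp : 0 < p.toReal) {σ : ι → κ} (hσ : Function.Injective σ)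
    {x : lp (fun _ : κ => E) p} {y : lp (fun _ : ι => E) p} (hxy : ∀ i, y i = x (σ i)) :
    ‖y‖ ≤ ‖x‖ := by
  refine lp.norm_le_of_forall_sum_le hp (lp.norm_nonneg' x) fun s => ?_
  simpa [hxy] using lp.sum_rpow_le_norm_rpow hp x (s.map ⟨σ, hσ⟩)

lemma dense_span_range_lp_single {𝕜 : Type*} [RCLike 𝕜] [DecidableEq ι] [Fact (1 ≤ p)]
    (hp : p ≠ ⊤) :
    Dense (Submodule.span 𝕜 (Set.range fun i => lp.single (E := fun _ : ι => 𝕜) p i 1) :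
      Set (lp (fun _ : ι => 𝕜) p)) := by
  refine fun x => mem_closure_of_tendsto (lp.hasSum_single hp x) (.of_forall fun s => ?_)
  refine Submodule.sum_mem _ fun i _ => ?_
  have hsmul : lp.single p i (x i) = x i • lp.single (E := fun _ : ι => 𝕜) p i 1 := by
    rw [← lp.single_smul, smul_eq_mul, mul_one]
  exact hsmul ▸ Submodule.smul_mem _ _ (Submodule.subset_span ⟨i, rfl⟩)

end SequenceSpace

/-- For the sequence of operators `T i = λ i • B ^ i` on `ℓ¹(ℕ)`, where `B` is the
backward shift, mean Li-Yorke chaos is equivalent to the existence of a dense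
absolutely mean irregular manifold, and to `limsup (1/n) ∑_{i=1}^n |λ i| = ∞`. -/
theorem backwardShift_meanLiYorkeChaotic_tfae
    (B : ellOne →L[ℝ] ellOne)
    (hB : ∀ (x : ellOne) (j : ℕ), (B x : ∀ _ : ℕ, ℝ) j = (x : ∀ _ : ℕ, ℝ) (j + 1))
    (lam : ℕ → ℝ) (T : ℕ → ellOne →L[ℝ] ellOne) (hT : ∀ i, T i = lam i • B ^ i) :
    List.TFAE [
      MeanLiYorkeChaotic T,
      ∃ Z : Submodule ℝ ellOne, Dense (Z : Set ellOne) ∧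
        ∀ z ∈ Z, z ≠ 0 → (ainf T z = 0 ∧ asup T z = ⊤),
      Filter.limsup
        (fun n => (((∑ i ∈ Finset.Icc 1 n, |lam i|) / n : ℝ) : EReal)) Filter.atTop = ⊤] := by
  obtain rfl : T = fun i => lam i • B ^ i := funext hT
  have hnorm : ‖B‖ ≤ 1 := B.opNorm_le_bound zero_le_one fun x =>
    (lp_norm_le_of_comp_injective (by simp) (add_left_injective 1) (hB x)).trans_eq (one_mul _).symm
  exact backwardShift_meanLiYorkeChaotic_tfae_general (e := fun j => lp.single 1 j 1) hnorm
    (dense_span_range_lp_single ENNReal.one_ne_top) (fun j => by simp [lp.norm_single])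
    (by ext i; simp [hB]) (fun j => by ext i; simp [hB, Pi.single_apply]) lam
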